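/- (Schaefer fixed point theorem) Let X be a Banach space and M : X → X a continuous compact map. If the set {x ∈ X : x = t·M(x) for some t ∈ (0,1)} is bounded, then M has a fixed point. -/

import Mathlib

/-!
The finite-dimensional input is Brouwer's theorem, proved with the Milnor–Rogers volume argument.
If `h` vanishes on the boundary of a bounded open set `U`, then for small `t` the map `id + t • h`
is a bijection of `U`, so `∫ x in U, det (1 + t • h' x)` is the volume of `U`. This integral is a
polynomial in `t`, hence equals the volume for `t = 1` too; but if `id + h` mapped `U` into its
boundary, the determinant would vanish identically. For a `C¹` map `f` without fixed point and with
values of norm at most `r`, the map `x ↦ x - φ x • f x`, with `φ` a bump function equal to `1` on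
the ball of radius `r`, has no zero, and normalizing it gives such a retraction onto a sphere.

Schauder's theorem follows by approximating a compact set by the convex hull of a finite net. A map
`M` as in Schaefer's theorem is composed with the radial retraction `ρ` onto a large ball: if
`x = M (ρ x)` lies outside the ball, then `ρ x = t • M (ρ x)` with `t < 1` lies on the sphere.
-/

open Filter Function MeasureTheory Metric Module Polynomial Set Topology
open scoped NNReal

section Polynomial

lemma exists_polynomial_eval_eq_integral {𝕜 α : Type*} [RCLike 𝕜] [MeasurableSpace α]
    {μ : Measure α} {n : ℕ} {p : α → 𝕜[X]} (hp : ∀ x, (p x).natDegree ≤ n)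
    (hint : ∀ t, Integrable (fun x ↦ (p x).eval t) μ) :
    ∃ q : 𝕜[X], ∀ t, q.eval t = ∫ x, (p x).eval t ∂μ := by
  let v (i : Fin (n + 1)) : 𝕜 := (i : ℕ)
  have hv : Injective v := Nat.cast_injective.comp Fin.val_injective
  have hdeg (x : α) : (p x).degree < (Finset.univ : Finset (Fin (n + 1))).card := by
    rw [Finset.card_fin]
    exact degree_le_natDegree.trans_lt (mod_cast Nat.lt_succ_of_le (hp x))
  have interpolate_eval (x : α) (t : 𝕜) :
      (p x).eval t = ∑ i, (p x).eval (v i) * (Lagrange.basis Finset.univ v i).eval t := by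
    conv_lhs => rw [Lagrange.eq_interpolate hv.injOn (hdeg x)]
    simp only [Lagrange.interpolate_apply, eval_finsetSum, eval_mul, eval_C]
  refine ⟨Lagrange.interpolate Finset.univ v fun i ↦ ∫ x, (p x).eval (v i) ∂μ, fun t ↦ ?_⟩
  simp only [interpolate_eval _ t, Lagrange.interpolate_apply, eval_finsetSum, eval_mul, eval_C]
  rw [integral_finsetSum _ fun i _ ↦ (hint (v i)).mul_const _]
  simp only [integral_mul_const]

lemma exists_polynomial_eval_eq_det_one_add_smul {R V : Type*} [CommRing R] [Nontrivial R]
    [AddCommGroup V] [Module R V] [Module.Free R V] [Module.Finite R V] (f : V →ₗ[R] V) :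
    ∃ p : R[X], p.natDegree ≤ finrank R V ∧ ∀ t, p.eval t = LinearMap.det (1 + t • f) := by
  let b := Free.chooseBasis R V
  let A := LinearMap.toMatrix b b (-f)
  refine ⟨A.charpolyRev, ?_, fun t ↦ ?_⟩
  · rw [← A.reverse_charpoly, finrank_eq_card_chooseBasisIndex, ← A.charpoly_natDegree_eq_dim]
    exact reverse_natDegree_le _
  · have eval_matrix : (evalRingHom t).mapMatrix (1 - (X : R[X]) • A.map C) = 1 - t • A := by
      rw [map_sub, map_one]
      congr 1
      ext i j
      simp only [RingHom.mapMatrix_apply, Matrix.map_apply, Matrix.smul_apply, smul_eq_mul,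
        coe_evalRingHom, eval_mul, eval_X, eval_C]
    rw [Matrix.charpolyRev, ← coe_evalRingHom, RingHom.map_det, eval_matrix,
      ← LinearMap.det_toMatrix b, map_add, map_smul, LinearMap.toMatrix_one]
    simp only [A, map_neg, smul_neg, sub_neg_eq_add]

end Polynomial

section Perturbation

variable {E : Type*} [NormedAddCommGroup E] [NormedSpace ℝ E]

lemma det_one_add_pos_of_norm_lt_one [FiniteDimensional ℝ E] {A : E →L[ℝ] E} (hA : ‖A‖ < 1) :
    0 < (1 + A).det := by
  have := FiniteDimensional.complete ℝ E
  have det_ne_zero (B : E →L[ℝ] E) (hB : B ∈ ball 0 1) : (1 + B).det ≠ 0 := by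
    have hunit : IsUnit (1 - -B) :=
      isUnit_one_sub_of_norm_lt_one (by rwa [norm_neg, ← mem_ball_zero_iff])
    rw [sub_neg_eq_add] at hunit
    exact ((hunit.map ContinuousLinearMap.toLinearMapRingHom).map LinearMap.det).ne_zero
  have det_cont : Continuous fun B : E →L[ℝ] E ↦ (1 + B).det :=
    ContinuousLinearMap.continuous_det.comp (by fun_prop)
  by_contra! hneg
  obtain ⟨B, hB, hdet⟩ := (convex_ball (0 : E →L[ℝ] E) 1).isPreconnected.intermediate_value
    (mem_ball_zero_iff.mpr hA) (mem_ball_self one_pos) det_cont.continuousOn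
    ⟨hneg, by simp [ContinuousLinearMap.det]⟩
  exact det_ne_zero B hB hdet

lemma inter_frontier_nonempty_of_isPreconnected {X : Type*} [TopologicalSpace X]
    {s t : Set X} (ht : IsPreconnected t) (hts : (t ∩ s).Nonempty) (hts' : (t ∩ sᶜ).Nonempty) :
    (t ∩ frontier s).Nonempty := by
  by_contra hempty
  have hcover : t ⊆ interior s ∪ interior sᶜ := by
    rw [← compl_frontier_eq_union_interior, subset_compl_iff_disjoint_right,
      disjoint_iff_inter_eq_empty]
    exact not_nonempty_iff_eq_empty.mp hempty
  obtain ⟨x, hxt, hxs⟩ := hts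
  obtain ⟨y, hyt, hys⟩ := hts'
  have hsub := ht.subset_left_of_subset_union isOpen_interior isOpen_interior
    (disjoint_compl_right.mono interior_subset interior_subset) hcover
    ⟨x, hxt, (hcover hxt).resolve_right fun hx ↦ interior_subset hx hxs⟩
  exact hys (interior_subset (hsub hyt))

lemma lipschitzWith_indicator_of_eqOn_frontier {F : Type*} [SeminormedAddCommGroup F]
    {h : E → F} {K : ℝ≥0} {s : Set E} (hh : LipschitzOnWith K h (closure s))
    (h0 : EqOn h 0 (frontier s)) : LipschitzWith K (s.indicator h) := by
  have dist_le_of_mem_of_notMem (x y : E) (hx : x ∈ s) (hy : y ∉ s) :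
      dist (h x) 0 ≤ K * dist x y := by
    obtain ⟨z, hz, hzs⟩ := inter_frontier_nonempty_of_isPreconnected
      (convex_segment x y).isPreconnected ⟨x, left_mem_segment ℝ x y, hx⟩
      ⟨y, right_mem_segment ℝ x y, hy⟩
    calc dist (h x) 0 = dist (h x) (h z) := by rw [h0 hzs, Pi.zero_apply]
      _ ≤ K * dist x z := hh.dist_le_mul x (subset_closure hx) z (frontier_subset_closure hzs)
      _ ≤ K * dist x y := by
        gcongr
        linarith [dist_add_dist_of_mem_segment hz, dist_nonneg (x := z) (y := y)]
  refine LipschitzWith.of_dist_le_mul fun x y ↦ ?_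
  by_cases hx : x ∈ s <;> by_cases hy : y ∈ s
  · simpa only [indicator_of_mem, hx, hy] using
      hh.dist_le_mul x (subset_closure hx) y (subset_closure hy)
  · simpa only [indicator_of_mem hx, indicator_of_notMem hy] using
      dist_le_of_mem_of_notMem x y hx hy
  · simpa only [indicator_of_mem hy, indicator_of_notMem hx, dist_comm] using
      dist_le_of_mem_of_notMem y x hy hx
  · simp only [indicator_of_notMem, hx, hy, not_false_eq_true, dist_self]
    positivity

lemma bijective_id_add_of_contractingWith {G : Type*} [NormedAddCommGroup G] [CompleteSpace G]
    {g : G → G} {K : ℝ≥0} (hg : ContractingWith K g) : Bijective fun x ↦ x + g x := by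
  constructor
  · exact (AntilipschitzWith.id.add_lipschitzWith hg.2 (by simpa using hg.1)).injective
  · intro y
    have hy : ContractingWith K fun x ↦ y - g x :=
      ⟨hg.1, LipschitzWith.of_dist_le_mul fun a b ↦ by
        simpa only [dist_sub_left] using hg.2.dist_le_mul a b⟩
    exact ⟨hy.fixedPoint, eq_sub_iff_add_eq.mp hy.fixedPoint_isFixedPt.symm⟩

lemma bijOn_id_add_of_lipschitzOnWith [CompleteSpace E] {h : E → E} {K : ℝ≥0} {s : Set E}
    (hK : K < 1) (hh : LipschitzOnWith K h (closure s)) (h0 : EqOn h 0 (frontier s)) :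
    BijOn (fun x ↦ x + h x) s s := by
  let g x := x + s.indicator h x
  have hbij : Bijective g :=
    bijective_id_add_of_contractingWith ⟨hK, lipschitzWith_indicator_of_eqOn_frontier hh h0⟩
  have image_compl : g '' sᶜ = sᶜ := by
    refine EqOn.image_eq_self fun x hx ↦ ?_
    simp only [g, indicator_of_notMem hx, add_zero, id]
  have image_self : g '' s = s := by
    rwa [image_compl_eq hbij, compl_inj_iff] at image_compl
  refine BijOn.congr ⟨mapsTo_iff_image_subset.mpr image_self.subset, hbij.injective.injOn,
    image_self.superset⟩ fun x hx ↦ ?_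
  simp only [g, indicator_of_mem hx]

lemma exists_lipschitzOnWith_of_contDiffAt {F : Type*} [NormedAddCommGroup F] [NormedSpace ℝ F]
    {f : E → F} {s : Set E} (hs : IsCompact s) (hf : ∀ x ∈ s, ContDiffAt ℝ 1 f x) :
    ∃ K, LipschitzOnWith K f s := by
  refine LocallyLipschitzOn.exists_lipschitzOnWith_of_compact hs fun x hx ↦ ?_
  obtain ⟨K, t, ht, hK⟩ := (hf x hx).exists_lipschitzOnWith
  exact ⟨K, t, mem_nhdsWithin_of_mem_nhds ht, hK⟩

end Perturbation

section Volume

variable {E : Type*} [NormedAddCommGroup E] [NormedSpace ℝ E] [FiniteDimensional ℝ E]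
  {h : E → E} {U : Set E}

lemma setIntegral_det_one_add_fderiv_of_lipschitzOnWith [MeasurableSpace E] [BorelSpace E]
    (μ : Measure E) [μ.IsAddHaarMeasure] {K : ℝ≥0} (hK : K < 1) (hU : IsOpen U)
    (hd : DifferentiableOn ℝ h U) (hh : LipschitzOnWith K h (closure U))
    (h0 : EqOn h 0 (frontier U)) :
    ∫ x in U, (1 + fderiv ℝ h x).det ∂μ = μ.real U := by
  have := FiniteDimensional.complete ℝ E
  have hbij := bijOn_id_add_of_lipschitzOnWith hK hh h0
  have hderiv (x : E) (hx : x ∈ U) : HasFDerivAt h (fderiv ℝ h x) x :=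
    (hd.differentiableAt (hU.mem_nhds hx)).hasFDerivAt
  have hdet (x : E) (hx : x ∈ U) : 0 < (1 + fderiv ℝ h x).det :=
    det_one_add_pos_of_norm_lt_one <| ((hderiv x hx).le_of_lipschitzOn (hU.mem_nhds hx)
      (hh.mono subset_closure)).trans_lt hK
  calc ∫ x in U, (1 + fderiv ℝ h x).det ∂μ
      = ∫ x in U, |(1 + fderiv ℝ h x).det| • (1 : ℝ) ∂μ :=
        setIntegral_congr_fun hU.measurableSet fun x hx ↦ by
          simp only [abs_of_pos (hdet x hx), smul_eq_mul, mul_one]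
    _ = ∫ _ in (fun x ↦ x + h x) '' U, 1 ∂μ :=
        (integral_image_eq_integral_abs_det_fderiv_smul μ hU.measurableSet
          (fun x hx ↦ ((hasFDerivAt_id x).add (hderiv x hx)).hasFDerivWithinAt)
          hbij.injOn fun _ ↦ (1 : ℝ)).symm
    _ = μ.real U := by rw [hbij.image_eq, setIntegral_const, smul_eq_mul, mul_one]

lemma setIntegral_det_one_add_fderiv [MeasurableSpace E] [BorelSpace E]
    (μ : Measure E) [μ.IsAddHaarMeasure] (hU : IsOpen U) (hUb : Bornology.IsBounded U)
    (hh : ∀ x ∈ closure U, ContDiffAt ℝ 1 h x) (h0 : EqOn h 0 (frontier U)) :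
    ∫ x in U, (1 + fderiv ℝ h x).det ∂μ = μ.real U := by
  have := FiniteDimensional.proper_real E
  obtain ⟨K, hK⟩ := exists_lipschitzOnWith_of_contDiffAt hUb.isCompact_closure hh
  have hd (x : E) (hx : x ∈ U) : DifferentiableAt ℝ h x :=
    (hh x (subset_closure hx)).differentiableAt one_ne_zero
  have small_smul : ∀ᶠ t : ℝ in 𝓝 0, ∫ x in U, (1 + t • fderiv ℝ h x).det ∂μ = μ.real U := by
    have hsmall : ∀ᶠ t : ℝ in 𝓝 0, ‖t‖₊ * K < 1 :=
      (by fun_prop : Continuous fun t : ℝ ↦ ‖t‖₊ * K).continuousAt.eventually_lt_const (by simp)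
    filter_upwards [hsmall] with t ht
    rw [← setIntegral_det_one_add_fderiv_of_lipschitzOnWith μ ht hU
      (fun x hx ↦ ((hd x hx).const_smul t).differentiableWithinAt)
      ((lipschitzWith_smul t).comp_lipschitzOnWith hK)
      (fun x hx ↦ by simp [h0 hx])]
    refine setIntegral_congr_fun hU.measurableSet fun x hx ↦ ?_
    rw [fderiv_const_smul (hd x hx)]
  have hint (t : ℝ) : IntegrableOn (fun x ↦ (1 + t • fderiv ℝ h x).det) U μ := by
    refine (ContinuousOn.integrableOn_compact hUb.isCompact_closure ?_).mono_set subset_closure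
    refine ContinuousLinearMap.continuous_det.comp_continuousOn (continuousOn_const.add ?_)
    exact ContinuousOn.const_smul (fun x hx ↦
      ((hh x hx).continuousAt_fderiv one_ne_zero).continuousWithinAt) t
  choose p hdeg hp using fun x ↦
    exists_polynomial_eval_eq_det_one_add_smul (fderiv ℝ h x : E →ₗ[ℝ] E)
  have hp' (x : E) (t : ℝ) : (p x).eval t = (1 + t • fderiv ℝ h x).det := hp x t
  obtain ⟨q, hq⟩ := exists_polynomial_eval_eq_integral (μ := μ.restrict U) hdeg
    fun t ↦ (hint t).congr (.of_forall fun x ↦ (hp' x t).symm)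
  simp only [hp'] at hq
  have hconst : q = C (μ.real U) := by
    refine eq_of_infinite_eval_eq _ _ (infinite_of_mem_nhds 0 ?_)
    filter_upwards [small_smul] with t ht
    rw [hq, ht, eval_C]
  simpa only [hconst, eval_C, one_smul] using (hq 1).symm

lemma not_mapsTo_frontier_of_eqOn_id {r : E → E} (hU : IsOpen U) (hUb : Bornology.IsBounded U)
    (hne : U.Nonempty) (hr : ∀ x ∈ closure U, ContDiffAt ℝ 1 r x) (hid : EqOn r id (frontier U)) :
    ¬ MapsTo r U (frontier U) := by
  intro hmaps
  borelize E
  have := FiniteDimensional.complete ℝ E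
  have hrU (x : E) (hx : x ∈ U) : ContDiffAt ℝ 1 r x := hr x (subset_closure hx)
  -- Where the derivative is invertible, `r` is open, but the frontier of `U` has empty interior.
  have det_eq_zero (x : E) (hx : x ∈ U) : (fderiv ℝ r x).det = 0 := by
    by_contra hdet
    have hnhds : frontier U ∈ 𝓝 (r x) := by
      have hstrict := (hrU x hx).hasStrictFDerivAt one_ne_zero
      rw [← (fderiv ℝ r x).coe_toContinuousLinearEquivOfDetNeZero hdet] at hstrict
      rw [← hstrict.map_nhds_eq_of_equiv]
      exact mem_map.mpr (mem_of_superset (hU.mem_nhds hx) hmaps)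
    have hinterior : interior (frontier U) = ∅ := by
      rw [← frontier_compl, interior_frontier hU.isClosed_compl]
    exact (hinterior.subset (mem_interior_iff_mem_nhds.mpr hnhds)).elim
  have hvol : (Measure.addHaar : Measure E).real U = 0 := by
    rw [← setIntegral_det_one_add_fderiv _ (h := fun x ↦ r x - x) hU hUb
      (fun x hx ↦ (hr x hx).sub contDiffAt_id) (fun x hx ↦ by simp [hid hx])]
    refine setIntegral_eq_zero_of_forall_eq_zero fun x hx ↦ ?_
    rw [fderiv_fun_sub ((hrU x hx).differentiableAt one_ne_zero) differentiableAt_fun_id,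
      fderiv_fun_id, ← ContinuousLinearMap.one_def, add_sub_cancel, det_eq_zero x hx]
  have hpos := ENNReal.toReal_pos (hU.measure_pos Measure.addHaar hne).ne' hUb.measure_lt_top.ne
  exact hpos.ne' hvol

end Volume

section Brouwer

lemma exists_isFixedPt_of_forall_exists_dist_lt {X : Type*} [MetricSpace X] {f : X → X}
    (hf : Continuous f) {K : Set X} (hK : IsCompact K) (hfK : ∀ x, f x ∈ K)
    (happrox : ∀ ε > 0, ∃ x, dist (f x) x < ε) : ∃ x, IsFixedPt f x := by
  choose x hx using fun n : ℕ ↦ happrox (1 / ((n : ℝ) + 1)) Nat.one_div_pos_of_nat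
  obtain ⟨y, -, φ, hφ, hfy⟩ := hK.tendsto_subseq fun n ↦ hfK (x n)
  have hdist : Tendsto (fun n ↦ dist (f (x n)) (x n)) atTop (𝓝 0) :=
    squeeze_zero (fun _ ↦ dist_nonneg) (fun n ↦ (hx n).le) tendsto_one_div_add_atTop_nhds_zero_nat
  have hxy : Tendsto (x ∘ φ) atTop (𝓝 y) := hfy.congr_dist (hdist.comp hφ.tendsto_atTop)
  exact ⟨y, tendsto_nhds_unique ((hf.tendsto y).comp hxy) hfy⟩

lemma exists_eq_zero_of_eqOn_id_sphere {E : Type*} [NormedAddCommGroup E] [InnerProductSpace ℝ E]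
    [FiniteDimensional ℝ E] {F : E → E} {R : ℝ} (hR : 0 < R)
    (hF : ∀ x ∈ closedBall 0 R, ContDiffAt ℝ 1 F x) (hid : EqOn F id (sphere 0 R)) :
    ∃ x ∈ closedBall 0 R, F x = 0 := by
  by_contra! hne
  have frontier_eq : frontier (ball (0 : E) R) = sphere 0 R := frontier_ball 0 hR.ne'
  refine not_mapsTo_frontier_of_eqOn_id (r := fun x ↦ (R / ‖F x‖) • F x)
    (isOpen_ball (x := (0 : E)) (ε := R)) isBounded_ball (nonempty_ball.mpr hR)
    (fun x hx ↦ ?_) (fun x hx ↦ ?_) (fun x hx ↦ ?_)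
  · have hxR := closure_ball_subset_closedBall hx
    exact (contDiffAt_const.div ((hF x hxR).norm ℝ (hne x hxR))
      (norm_ne_zero_iff.mpr (hne x hxR))).smul (hF x hxR)
  · rw [frontier_eq] at hx
    simp only [hid hx, id, mem_sphere_zero_iff_norm.mp hx, div_self hR.ne', one_smul]
  · have hFx := hne x (ball_subset_closedBall hx)
    rw [frontier_eq, mem_sphere_zero_iff_norm, norm_smul, norm_div, norm_norm,
      div_mul_cancel₀ _ (norm_ne_zero_iff.mpr hFx), Real.norm_of_nonneg hR.le]

lemma exists_isFixedPt_of_contDiff {E : Type*} [NormedAddCommGroup E] [InnerProductSpace ℝ E]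
    [FiniteDimensional ℝ E] {f : E → E} (hf : ContDiff ℝ 1 f)
    (hbdd : Bornology.IsBounded (range f)) : ∃ x, IsFixedPt f x := by
  obtain ⟨R, hR, hfR⟩ := hbdd.exists_pos_norm_le
  let φ : ContDiffBump (0 : E) := ⟨R, 2 * R, hR, by linarith⟩
  have hφ : ContDiff ℝ 1 fun x ↦ x - φ x • f x := contDiff_id.sub (φ.contDiff.smul hf)
  obtain ⟨x, -, hx⟩ := exists_eq_zero_of_eqOn_id_sphere φ.rOut_pos (fun _ _ ↦ hφ.contDiffAt)
    fun x hx ↦ by simp only [φ.zero_of_le_dist (mem_sphere.mp hx).ge, zero_smul, sub_zero, id]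
  rw [sub_eq_zero] at hx
  have norm_le : ‖x‖ ≤ R := by
    calc ‖x‖ = φ x * ‖f x‖ := by
          conv_lhs => rw [hx, norm_smul, Real.norm_of_nonneg φ.nonneg]
      _ ≤ 1 * R := mul_le_mul φ.le_one (hfR _ (mem_range_self x)) (norm_nonneg _) zero_le_one
      _ = R := one_mul R
  rw [φ.one_of_mem_closedBall (mem_closedBall_zero_iff.mpr norm_le), one_smul] at hx
  exact ⟨x, hx.symm⟩

lemma exists_isFixedPt_of_innerProductSpace {E : Type*} [NormedAddCommGroup E]
    [InnerProductSpace ℝ E] [FiniteDimensional ℝ E] {f : E → E} (hf : Continuous f)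
    (hbdd : Bornology.IsBounded (range f)) : ∃ x, IsFixedPt f x := by
  have := FiniteDimensional.proper_real E
  refine exists_isFixedPt_of_forall_exists_dist_lt hf hbdd.isCompact_closure
    (fun x ↦ subset_closure (mem_range_self x)) fun ε hε ↦ ?_
  obtain ⟨g, hg, hgf, -⟩ := hf.exists_contDiff_approx 1 (continuous_const (y := ε)) fun _ ↦ hε
  have hg_bdd : Bornology.IsBounded (range g) := by
    refine (hbdd.thickening (δ := ε)).subset ?_
    rintro _ ⟨x, rfl⟩
    exact mem_thickening_iff.mpr ⟨f x, mem_range_self x, hgf x⟩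
  obtain ⟨x, hx⟩ := exists_isFixedPt_of_contDiff hg hg_bdd
  refine ⟨x, ?_⟩
  rw [dist_comm]
  simpa only [hx.eq] using hgf x

lemma exists_isFixedPt_of_finiteDimensional {E : Type*} [NormedAddCommGroup E] [NormedSpace ℝ E]
    [FiniteDimensional ℝ E] {f : E → E} (hf : Continuous f)
    (hbdd : Bornology.IsBounded (range f)) : ∃ x, IsFixedPt f x := by
  let e : E ≃L[ℝ] EuclideanSpace ℝ (Fin (finrank ℝ E)) := toEuclidean
  have conj_bdd : Bornology.IsBounded (range (e ∘ f ∘ e.symm)) := by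
    rw [range_comp, e.symm.surjective.range_comp]
    exact e.lipschitz.isBounded_image hbdd
  obtain ⟨z, hz⟩ := exists_isFixedPt_of_innerProductSpace
    (e.continuous.comp (hf.comp e.symm.continuous)) conj_bdd
  exact ⟨e.symm z, e.injective (by simpa using hz.eq)⟩

end Brouwer

section Schauder

lemma exists_partitionOfUnity_isSubordinate_ball {X : Type*} [MetricSpace X] {K : Set X}
    (hK : IsCompact K) {ε : ℝ} (hε : 0 < ε) :
    ∃ (T : Finset X) (ρ : PartitionOfUnity T X K), ρ.IsSubordinate fun i ↦ ball (i : X) ε := by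
  obtain ⟨T, -, hT, hcover⟩ := hK.finite_cover_balls hε
  refine ⟨hT.toFinset, PartitionOfUnity.exists_isSubordinate_of_locallyFinite hK.isClosed _
    (fun _ ↦ isOpen_ball) (locallyFinite_of_finite _) ?_⟩
  simpa only [iUnion_subtype, Finite.mem_toFinset] using hcover

variable {X : Type*} [NormedAddCommGroup X] [NormedSpace ℝ X]

lemma exists_dist_lt_of_forall_mem_isCompact {f : X → X} (hf : Continuous f) {K : Set X}
    (hK : IsCompact K) (hfK : ∀ x, f x ∈ K) {ε : ℝ} (hε : 0 < ε) :
    ∃ x, dist (f x) x < ε := by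
  obtain ⟨T, ρ, hρ⟩ := exists_partitionOfUnity_isSubordinate_ball hK hε
  let combination (z : T → ℝ) : X := ∑ i, z i • (i : X)
  let weights (x : X) (i : T) : ℝ := ρ i (f x)
  have weights_bdd : Bornology.IsBounded (range weights) := by
    refine (isBounded_Icc (0 : T → ℝ) 1).subset ?_
    rintro _ ⟨x, rfl⟩
    exact ⟨fun i ↦ ρ.nonneg i _, fun i ↦ ρ.le_one i _⟩
  have combination_mem_ball (x : X) : combination (weights x) ∈ ball (f x) ε := by
    have hmem := ρ.finsum_smul_mem_convex (g := fun i _ ↦ (i : X)) (hfK x) (fun i hi ↦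
      mem_ball_comm.mp (hρ i (subset_tsupport _ hi))) (convex_ball (f x) ε)
    rwa [finsum_eq_sum_of_fintype] at hmem
  obtain ⟨z, hz⟩ := exists_isFixedPt_of_finiteDimensional (f := weights ∘ combination)
    (by fun_prop) (weights_bdd.subset (range_comp_subset_range _ _))
  have hz' : weights (combination z) = z := hz
  refine ⟨combination z, mem_ball'.mp ?_⟩
  simpa only [hz'] using combination_mem_ball (combination z)

lemma exists_isFixedPt_of_forall_mem_isCompact {f : X → X} (hf : Continuous f) {K : Set X}
    (hK : IsCompact K) (hfK : ∀ x, f x ∈ K) : ∃ x, IsFixedPt f x :=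
  exists_isFixedPt_of_forall_exists_dist_lt hf hK hfK fun _ hε ↦
    exists_dist_lt_of_forall_mem_isCompact hf hK hfK hε

end Schauder

section LeraySchauder

variable {X : Type*} [NormedAddCommGroup X] [NormedSpace ℝ X] {R : ℝ}

/-- The radial retraction onto the closed ball of radius `R` about the origin: it fixes the points
of the ball and rescales the others to norm `R`. It is meaningful for `0 < R`. -/
noncomputable def radialRetraction (R : ℝ) (x : X) : X := (R / max R ‖x‖) • x

lemma continuous_radialRetraction (hR : 0 < R) : Continuous (radialRetraction R : X → X) :=
  (continuous_const.div (by fun_prop) fun _ ↦ (lt_max_of_lt_left hR).ne').smul continuous_id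

lemma radialRetraction_of_norm_le (hR : 0 < R) {x : X} (hx : ‖x‖ ≤ R) :
    radialRetraction R x = x := by
  rw [radialRetraction, max_eq_left hx, div_self hR.ne', one_smul]

lemma radialRetraction_of_lt_norm {x : X} (hx : R < ‖x‖) :
    radialRetraction R x = (R / ‖x‖) • x := by
  rw [radialRetraction, max_eq_right hx.le]

lemma norm_radialRetraction_of_lt_norm (hR : 0 < R) {x : X} (hx : R < ‖x‖) :
    ‖radialRetraction R x‖ = R := by
  rw [radialRetraction_of_lt_norm hx, norm_smul, norm_div, norm_norm,
    div_mul_cancel₀ _ (hR.trans hx).ne', Real.norm_of_nonneg hR.le]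

lemma radialRetraction_mem_closedBall (hR : 0 < R) (x : X) :
    radialRetraction R x ∈ closedBall 0 R := by
  rw [mem_closedBall_zero_iff]
  rcases le_or_gt ‖x‖ R with hx | hx
  · rwa [radialRetraction_of_norm_le hR hx]
  · exact (norm_radialRetraction_of_lt_norm hR hx).le

lemma exists_mem_closedBall_isFixedPt_of_forall_ne_smul {M : X → X} {K : Set X} (hR : 0 < R)
    (hM : ContinuousOn M (closedBall 0 R)) (hK : IsCompact K) (hMK : MapsTo M (closedBall 0 R) K)
    (hne : ∀ x ∈ sphere (0 : X) R, ∀ t ∈ Ioo (0 : ℝ) 1, x ≠ t • M x) :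
    ∃ x ∈ closedBall 0 R, IsFixedPt M x := by
  have hmem := radialRetraction_mem_closedBall (X := X) hR
  obtain ⟨x, hx⟩ := exists_isFixedPt_of_forall_mem_isCompact
    (hM.comp_continuous (continuous_radialRetraction hR) hmem) hK fun x ↦ hMK (hmem x)
  have hx' : M (radialRetraction R x) = x := hx
  rcases le_or_gt ‖x‖ R with hxR | hRx
  · rw [radialRetraction_of_norm_le hR hxR] at hx'
    exact ⟨x, mem_closedBall_zero_iff.mpr hxR, hx'⟩
  · refine absurd ?_ (hne (radialRetraction R x)
      (mem_sphere_zero_iff_norm.mpr (norm_radialRetraction_of_lt_norm hR hRx)) (R / ‖x‖)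
      ⟨div_pos hR (hR.trans hRx), (div_lt_one (hR.trans hRx)).mpr hRx⟩)
    rw [hx', radialRetraction_of_lt_norm hRx]

end LeraySchauder

theorem stmt_11_general {X : Type*} [NormedAddCommGroup X] [NormedSpace ℝ X]
    (M : X → X) (hMcont : Continuous M)
    (hMcompact : ∀ s : Set X, Bornology.IsBounded s → IsCompact (closure (M '' s)))
    (hbdd : ∃ C : ℝ, ∀ (x : X) (t : ℝ), t ∈ Set.Ioo (0:ℝ) 1 → x = t • M x → ‖x‖ ≤ C) :
    ∃ x : X, M x = x := by
  obtain ⟨C, hC⟩ := hbdd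
  obtain ⟨R, hR⟩ := exists_gt (max C 0)
  obtain ⟨hCR, hR0⟩ := max_lt_iff.mp hR
  obtain ⟨x, -, hx⟩ := exists_mem_closedBall_isFixedPt_of_forall_ne_smul hR0 hMcont.continuousOn
    (hMcompact _ isBounded_closedBall) ((mapsTo_image M _).mono_right subset_closure)
    fun x hx t ht hxt ↦ (hC x t ht hxt).not_gt ((mem_sphere_zero_iff_norm.mp hx).symm ▸ hCR)
  exact ⟨x, hx⟩

/-- Schaefer fixed point theorem. -/
theorem stmt_11 {X : Type*} [NormedAddCommGroup X] [NormedSpace ℝ X] [CompleteSpace X]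
    (M : X → X) (hMcont : Continuous M)
    (hMcompact : ∀ s : Set X, Bornology.IsBounded s → IsCompact (closure (M '' s)))
    (hbdd : ∃ C : ℝ, ∀ (x : X) (t : ℝ), t ∈ Set.Ioo (0:ℝ) 1 → x = t • M x → ‖x‖ ≤ C) :
    ∃ x : X, M x = x :=
  stmt_11_general M hMcont hMcompact hbdd
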